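/- Let 𝒜 be an alphabet with 1 ∈ 𝒜 and δ = δ_𝒜 > 1/2, A = max 𝒜, and let ε₀ ∈ (0, 1/2500). Then there exists N₀ (depending on 𝒜 and ε₀) such that for every integer N ≥ N₀ there is a finite set Ω ⊆ Γ_𝒜 with: (i) every γ ∈ Ω satisfies N/(70A²) ≤ ‖γ‖ ≤ 1.01·N; (ii) N^{2δ−ε₀} ≤ #Ω ≤ 9·N^{2δ}. -/

import Mathlib

open Real Filter

noncomputable section

/-- The continuant `⟨d₁,…,d_k⟩`, with `⟨⟩ = 1`, satisfying
`⟨d₁,…,d_k⟩ = d₁·⟨d₂,…,d_k⟩ + ⟨d₃,…,d_k⟩`. -/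
def cont : List ℕ → ℕ
  | [] => 1
  | [d] => d
  | d :: e :: l => d * cont (e :: l) + cont l

/-- The value of the finite continued fraction `[d₁,…,d_k] = ⟨d₂,…,d_k⟩ / ⟨d₁,…,d_k⟩`. -/
def cfVal (l : List ℕ) : ℝ := (cont l.tail : ℝ) / (cont l : ℝ)

/-- The set `E_𝒜` of values of infinite continued fractions `[0; d₁, d₂, …]`
with all partial quotients in `𝒜`. -/
def cfSet (A : Finset ℕ) : Set ℝ :=
  {x | ∃ d : ℕ → ℕ, (∀ i, d i ∈ A) ∧
    Tendsto (fun k => cfVal ((List.range k).map d)) atTop (nhds x)}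

/-- `δ_𝒜`, the Hausdorff dimension of `E_𝒜` (as a real number). -/
def hdim (A : Finset ℕ) : ℝ := (dimH (cfSet A)).toReal

/-- The generator `(0 1; 1 d)` of the semigroup `Γ_𝒜`. -/
def gen (d : ℕ) : Matrix (Fin 2) (Fin 2) ℤ := !![0, 1; 1, (d : ℤ)]

/-- The norm `‖γ‖`: the maximum of the absolute values of the entries. -/
def mnorm (γ : Matrix (Fin 2) (Fin 2) ℤ) : ℤ :=
  max (max |γ 0 0| |γ 0 1|) (max |γ 1 0| |γ 1 1|)

/-- The semigroup `Γ_𝒜` generated by the matrices `(0 1; 1 a)`, `a ∈ 𝒜`. -/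
def Gamma (A : Finset ℕ) : Set (Matrix (Fin 2) (Fin 2) ℤ) :=
  {γ | ∃ l : List ℕ, l ≠ [] ∧ (∀ d ∈ l, d ∈ A) ∧ γ = (l.map gen).prod}

/-!
Let `δ = δ_𝒜`. A prefix of a continued fraction with digits at most `A` can be stopped when its
denominator `q = ‖γ‖` lies in the shell `N / (A + 1) ≤ q ≤ N`, because appending a digit multiplies
`q` by at most `A + 1`; the convergent then approximates the limit within `1 / q² ≤ (A + 1)² / N²`.
Hence `E_𝒜` is covered by at most as many balls of radius `(A + 1)² / N²` as there are matrices of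
`Γ_𝒜` in the shell. If for some `s < δ` there were at most `N ^ (2 * s)` of them for infinitely many
`N`, these covers would bound the `s`-dimensional Hausdorff measure of `E_𝒜` and give `δ ≤ s`.
So for `s = δ - ε₀ / 2` and all large `N` the shell has at least `N ^ (2 * δ - ε₀)` elements, and
`Ω` consists of just that many of them, rounded up.
-/

section Covering

open MeasureTheory Metric Topology
open scoped NNReal ENNReal

lemma sum_ediam_closedEBall_rpow_le {X : Type*} [PseudoEMetricSpace X] (F : Finset X)
    (r s : ℝ≥0) :
    ∑ x : F, ediam (closedEBall (x : X) r) ^ (s : ℝ) ≤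
      ((2 ^ (s : ℝ) * (F.card * r ^ (s : ℝ)) : ℝ≥0) : ℝ≥0∞) := by
  calc ∑ x : F, ediam (closedEBall (x : X) r) ^ (s : ℝ)
      ≤ ∑ _x : F, (2 * (r : ℝ≥0∞)) ^ (s : ℝ) := by gcongr; exact ediam_closedEBall_le
    _ = ((2 ^ (s : ℝ) * (F.card * r ^ (s : ℝ)) : ℝ≥0) : ℝ≥0∞) := by
        rw [Finset.sum_const, Finset.card_univ, Fintype.card_coe, nsmul_eq_mul,
          ENNReal.mul_rpow_of_nonneg _ _ s.coe_nonneg]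
        push_cast [ENNReal.coe_rpow_of_nonneg _ s.coe_nonneg]
        ring

lemma dimH_le_of_frequently_isCover {X β : Type*} [EMetricSpace X] {E : Set X} {l : Filter β}
    {r : β → ℝ≥0} (hr : Tendsto r l (𝓝 0)) {F : β → Finset X} {C s : ℝ≥0}
    (hF : ∃ᶠ n in l, IsCover (r n) E (F n) ∧ (F n).card * r n ^ (s : ℝ) ≤ C) : dimH E ≤ s := by
  borelize X
  let S : Set β := {n | IsCover (r n) E (F n) ∧ (F n).card * r n ^ (s : ℝ) ≤ C}
  -- Restricting `l` to the good indices turns the frequent bound into an eventual one.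
  have : (l ⊓ 𝓟 S).NeBot := frequently_iff_neBot.1 hF
  have hS : ∀ᶠ n in l ⊓ 𝓟 S, n ∈ S := eventually_inf_principal.2 (.of_forall fun _ hn => hn)
  have hr' : Tendsto (fun n => 2 * (r n : ℝ≥0∞)) l (𝓝 0) := by
    simpa using ENNReal.Tendsto.const_mul (ENNReal.tendsto_coe.2 hr) (Or.inr ENNReal.ofNat_ne_top)
  have hsub : ∀ n ∈ S, E ⊆ ⋃ x : F n, closedEBall (x : X) (r n) := by
    rintro n ⟨hn, -⟩
    rw [isCover_iff_subset_iUnion_closedEBall] at hn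
    simpa only [Set.iUnion_subtype, Finset.mem_coe] using hn
  have hsum : ∀ n ∈ S, ∑ x : F n, ediam (closedEBall (x : X) (r n)) ^ (s : ℝ) ≤
      ((2 ^ (s : ℝ) * C : ℝ≥0) : ℝ≥0∞) := by
    rintro n ⟨-, hn⟩
    refine (sum_ediam_closedEBall_rpow_le (F n) (r n) s).trans ?_
    gcongr
  suffices hle : μH[(s : ℝ)] E ≤ ((2 ^ (s : ℝ) * C : ℝ≥0) : ℝ≥0∞) from
    dimH_le_of_hausdorffMeasure_ne_top (ne_top_of_le_ne_top ENNReal.coe_ne_top hle)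
  calc μH[(s : ℝ)] E
      ≤ liminf (fun n => ∑ x : F n, ediam (closedEBall (x : X) (r n)) ^ (s : ℝ)) (l ⊓ 𝓟 S) :=
        Measure.hausdorffMeasure_le_liminf_sum _ _ _ (hr'.mono_left inf_le_left) _
          (.of_forall fun _ _ => ediam_closedEBall_le) (hS.mono hsub)
    _ ≤ liminf (fun _ => ((2 ^ (s : ℝ) * C : ℝ≥0) : ℝ≥0∞)) (l ⊓ 𝓟 S) :=
        liminf_le_liminf (hS.mono hsum)
    _ = _ := liminf_const _

end Covering

section Continuants

open Matrix

/-- The element `γ = (p' p; q' q)` of `Γ_𝒜 ∪ {1}` with word `d₁,…,d_k`. Its second column holds the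
numerator and the denominator of `[d₁,…,d_k]`, the first those of `[d₁,…,d_{k-1}]`. The empty word
gives `p / q = 0 / 1`, where `cfVal` takes the junk value `1`. -/
def cfMat (l : List ℕ) : Matrix (Fin 2) (Fin 2) ℤ := (l.map gen).prod

variable {l m : List ℕ} {x : ℕ}

lemma cfMat_cons (x : ℕ) (l : List ℕ) : cfMat (x :: l) = gen x * cfMat l := by simp [cfMat]

lemma cfMat_append (l m : List ℕ) : cfMat (l ++ m) = cfMat l * cfMat m := by simp [cfMat]

lemma transpose_cfMat (l : List ℕ) : (cfMat l)ᵀ = cfMat l.reverse := by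
  have hgen : transpose ∘ gen = gen := by
    ext d i j
    fin_cases i <;> fin_cases j <;> rfl
  rw [cfMat, cfMat, transpose_list_prod, List.map_map, hgen, List.map_reverse]

lemma det_cfMat (l : List ℕ) : (cfMat l).det = (-1) ^ l.length := by
  induction l with
  | nil => simp [cfMat]
  | cons x l ih =>
    rw [cfMat_cons, det_mul, ih, gen, det_fin_two_of, List.length_cons, pow_succ']
    simp

lemma cfMat_cons_zero (x : ℕ) (l : List ℕ) (j : Fin 2) : cfMat (x :: l) 0 j = cfMat l 1 j := by
  simp [cfMat_cons, gen, mul_apply]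

lemma cfMat_cons_one (x : ℕ) (l : List ℕ) (j : Fin 2) :
    cfMat (x :: l) 1 j = cfMat l 0 j + x * cfMat l 1 j := by
  simp [cfMat_cons, gen, mul_apply]

lemma cfMat_one_one : ∀ l : List ℕ, cfMat l 1 1 = cont l
  | [] => by simp [cfMat, cont]
  | [x] => by simp [cfMat, cont, gen]
  | x :: y :: l => by
    rw [cfMat_cons_one, cfMat_cons_zero, cfMat_one_one (y :: l), cfMat_one_one l, cont]
    push_cast
    ring

lemma cont_reverse (l : List ℕ) : cont l.reverse = cont l := by
  have h := cfMat_one_one l.reverse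
  rw [← transpose_cfMat, transpose_apply, cfMat_one_one] at h
  exact_mod_cast h.symm

lemma cont_append_pair (l : List ℕ) (x y : ℕ) :
    cont (l ++ [x, y]) = y * cont (l ++ [x]) + cont l := by
  rw [← cont_reverse, ← cont_reverse (l ++ [x]), ← cont_reverse l]
  simp [cont]

lemma cont_le_cont_cons (hx : 0 < x) (l : List ℕ) : cont l ≤ cont (x :: l) := by
  cases l with
  | nil => exact hx
  | cons y l => exact (Nat.le_mul_of_pos_left _ hx).trans (Nat.le_add_right _ _)

lemma cont_cons_le (hl : ∀ d ∈ l, 0 < d) (x : ℕ) : cont (x :: l) ≤ (x + 1) * cont l := by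
  cases l with
  | nil => simp [cont]
  | cons y l =>
    have hle : cont l ≤ cont (y :: l) := cont_le_cont_cons (hl y List.mem_cons_self) l
    rw [cont, add_one_mul]
    gcongr

lemma cont_append_singleton_le (hl : ∀ d ∈ l, 0 < d) (x : ℕ) :
    cont (l ++ [x]) ≤ (x + 1) * cont l := by
  rw [← cont_reverse, ← cont_reverse l, List.reverse_append]
  exact cont_cons_le (fun d hd => hl d (List.mem_reverse.1 hd)) x

lemma cont_pos (hl : ∀ d ∈ l, 0 < d) : 0 < cont l := by
  induction l with
  | nil => exact one_pos
  | cons x l ih =>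
    rw [List.forall_mem_cons] at hl
    exact (ih hl.2).trans_le (cont_le_cont_cons hl.1 l)

lemma cfMat_zero_one_mem_Icc (hl : ∀ d ∈ l, 0 < d) : cfMat l 0 1 ∈ Set.Icc 0 (cont l : ℤ) := by
  cases l with
  | nil => simp [cfMat]
  | cons x l =>
    rw [cfMat_cons_zero, cfMat_one_one]
    exact ⟨by positivity, Nat.cast_le.2 (cont_le_cont_cons (hl x List.mem_cons_self) l)⟩

lemma cfMat_one_zero_mem_Icc (hl : ∀ d ∈ l, 0 < d) : cfMat l 1 0 ∈ Set.Icc 0 (cont l : ℤ) := by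
  rw [← transpose_apply (cfMat l), transpose_cfMat, ← cont_reverse l]
  exact cfMat_zero_one_mem_Icc fun d hd => hl d (List.mem_reverse.1 hd)

lemma cfMat_zero_zero_mem_Icc (hl : ∀ d ∈ l, 0 < d) : cfMat l 0 0 ∈ Set.Icc 0 (cont l : ℤ) := by
  cases l with
  | nil => simp [cfMat, cont]
  | cons x l =>
    rw [List.forall_mem_cons] at hl
    rw [cfMat_cons_zero]
    exact Set.Icc_subset_Icc_right (Nat.cast_le.2 (cont_le_cont_cons hl.1 l))
      (cfMat_one_zero_mem_Icc hl.2)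

lemma mnorm_cfMat (hl : ∀ d ∈ l, 0 < d) : mnorm (cfMat l) = cont l := by
  obtain ⟨h00, h00'⟩ := cfMat_zero_zero_mem_Icc hl
  obtain ⟨h01, h01'⟩ := cfMat_zero_one_mem_Icc hl
  obtain ⟨h10, h10'⟩ := cfMat_one_zero_mem_Icc hl
  rw [mnorm, cfMat_one_one, abs_of_nonneg h00, abs_of_nonneg h01, abs_of_nonneg h10, Nat.abs_cast,
    max_eq_right h10', max_eq_right (max_le h00' h01')]

lemma cont_append (l m : List ℕ) :
    (cont (l ++ m) : ℤ) = cfMat l 1 0 * cfMat m 0 1 + cont l * cont m := by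
  rw [← cfMat_one_one, cfMat_append, mul_apply, Fin.sum_univ_two, cfMat_one_one, cfMat_one_one]

lemma cont_mul_cont_le_cont_append (hl : ∀ d ∈ l, 0 < d) (hm : ∀ d ∈ m, 0 < d) :
    cont l * cont m ≤ cont (l ++ m) := by
  have h := mul_nonneg (cfMat_one_zero_mem_Icc hl).1 (cfMat_zero_one_mem_Icc hm).1
  zify
  rw [cont_append]
  linarith

lemma cfVal_eq_cfMat_div (hl : l ≠ []) : cfVal l = (cfMat l 0 1 : ℝ) / cont l := by
  obtain ⟨x, m, rfl⟩ := List.exists_cons_of_ne_nil hl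
  rw [cfMat_cons_zero, cfMat_one_one, cfVal, List.tail_cons, Int.cast_natCast]

lemma cfVal_append_sub_cfVal (hne : l ≠ []) (hl : ∀ d ∈ l, 0 < d) (hm : ∀ d ∈ m, 0 < d) :
    cfVal (l ++ m) - cfVal l =
      (-1) ^ l.length * (cfMat m 0 1 / (cont l * cont (l ++ m) : ℝ)) := by
  have hdet : (cfMat l 0 0 * cont l - cfMat l 0 1 * cfMat l 1 0 : ℝ) = (-1) ^ l.length := by
    have h := det_cfMat l
    rw [det_fin_two, cfMat_one_one] at h
    exact_mod_cast h
  have hnum : (cfMat (l ++ m) 0 1 : ℝ) = cfMat l 0 0 * cfMat m 0 1 + cfMat l 0 1 * cont m := by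
    rw [cfMat_append, mul_apply, Fin.sum_univ_two, cfMat_one_one]
    push_cast
    rfl
  have hden : (cont (l ++ m) : ℝ) = cfMat l 1 0 * cfMat m 0 1 + cont l * cont m :=
    mod_cast cont_append l m
  have hl0 : (cont l : ℝ) ≠ 0 := Nat.cast_ne_zero.2 (cont_pos hl).ne'
  have hlm0 : (cont (l ++ m) : ℝ) ≠ 0 :=
    Nat.cast_ne_zero.2 (cont_pos (List.forall_mem_append.2 ⟨hl, hm⟩)).ne'
  rw [cfVal_eq_cfMat_div hne, cfVal_eq_cfMat_div (List.append_ne_nil_of_left_ne_nil hne m), ← hdet]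
  field_simp
  rw [hnum, hden]
  ring

lemma abs_cfVal_append_sub_cfVal_le (hne : l ≠ []) (hl : ∀ d ∈ l, 0 < d) (hm : ∀ d ∈ m, 0 < d) :
    |cfVal (l ++ m) - cfVal l| ≤ 1 / (cont l : ℝ) ^ 2 := by
  have hl0 : (0 : ℝ) < cont l := Nat.cast_pos.2 (cont_pos hl)
  have hm0 : (0 : ℝ) < cont m := Nat.cast_pos.2 (cont_pos hm)
  obtain ⟨hnonneg, hle⟩ := cfMat_zero_one_mem_Icc hm
  have hnonneg' : (0 : ℝ) ≤ cfMat m 0 1 := mod_cast hnonneg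
  have hle' : (cfMat m 0 1 : ℝ) ≤ cont m := mod_cast hle
  have hmul : (cont l * cont m : ℝ) ≤ cont (l ++ m) := mod_cast cont_mul_cont_le_cont_append hl hm
  calc |cfVal (l ++ m) - cfVal l| = cfMat m 0 1 / (cont l * cont (l ++ m) : ℝ) := by
        rw [cfVal_append_sub_cfVal hne hl hm, abs_mul, abs_neg_one_pow, one_mul,
          abs_of_nonneg (div_nonneg hnonneg' (by positivity))]
    _ ≤ cont m / (cont l * (cont l * cont m) : ℝ) := by gcongr
    _ = 1 / (cont l : ℝ) ^ 2 := by field_simp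

end Continuants

section PartialQuotients

/-- The first `k` partial quotients `d 0, …, d (k - 1)`. -/
def partialQuotients (d : ℕ → ℕ) (k : ℕ) : List ℕ := (List.range k).map d

variable {d : ℕ → ℕ}

lemma partialQuotients_succ (d : ℕ → ℕ) (k : ℕ) :
    partialQuotients d (k + 1) = partialQuotients d k ++ [d k] := by
  simp [partialQuotients, List.range_succ]

lemma partialQuotients_add (d : ℕ → ℕ) (k n : ℕ) :
    partialQuotients d (k + n) =
      partialQuotients d k ++ partialQuotients (fun i => d (k + i)) n := by
  simp [partialQuotients, List.range_add, Function.comp_def]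

lemma forall_mem_partialQuotients {p : ℕ → Prop} (hd : ∀ i, p (d i)) (k : ℕ) :
    ∀ a ∈ partialQuotients d k, p a :=
  List.forall_mem_map.2 fun i _ => hd i

lemma partialQuotients_succ_ne_nil (d : ℕ → ℕ) (k : ℕ) : partialQuotients d (k + 1) ≠ [] := by
  simp [partialQuotients]

lemma strictMono_cont_partialQuotients (hd : ∀ i, 0 < d i) :
    StrictMono fun k => cont (partialQuotients d (k + 1)) := by
  refine strictMono_nat_of_lt_succ fun k => ?_
  have hpos : 0 < cont (partialQuotients d k) := cont_pos (forall_mem_partialQuotients hd k)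
  calc cont (partialQuotients d (k + 1))
      ≤ d (k + 1) * cont (partialQuotients d (k + 1)) := Nat.le_mul_of_pos_left _ (hd _)
    _ < d (k + 1) * cont (partialQuotients d (k + 1)) + cont (partialQuotients d k) :=
        Nat.lt_add_of_pos_right hpos
    _ = cont (partialQuotients d (k + 1 + 1)) := by
        rw [partialQuotients_succ d (k + 1), partialQuotients_succ d k, List.append_assoc]
        exact (cont_append_pair _ _ _).symm

lemma exists_cont_partialQuotients_le_lt (hd : ∀ i, 0 < d i) {N : ℕ} (hN : d 0 ≤ N) :
    ∃ k, cont (partialQuotients d (k + 1)) ≤ N ∧ N < cont (partialQuotients d (k + 2)) := by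
  have hmono := strictMono_cont_partialQuotients hd
  have hN' : N ∈ Set.Ici (cont (partialQuotients d 1)) := hN
  have hcover := iUnion_Ico_map_succ_eq_Ici (fun k => hmono.monotone (Nat.zero_le k))
    hmono.not_bddAbove_range_of_wellFoundedLT
  exact Set.mem_iUnion.1 (hcover.symm.subset hN')

lemma abs_sub_cfVal_partialQuotients_le (hd : ∀ i, 0 < d i) {x : ℝ}
    (hx : Tendsto (fun k => cfVal (partialQuotients d k)) atTop (nhds x)) (k : ℕ) :
    |x - cfVal (partialQuotients d (k + 1))| ≤
      1 / (cont (partialQuotients d (k + 1)) : ℝ) ^ 2 := by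
  refine le_of_tendsto (hx.sub_const _).abs ?_
  filter_upwards [eventually_ge_atTop (k + 1)] with n hn
  obtain ⟨t, rfl⟩ := Nat.exists_eq_add_of_le hn
  rw [partialQuotients_add]
  exact abs_cfVal_append_sub_cfVal_le (partialQuotients_succ_ne_nil d k)
    (forall_mem_partialQuotients hd _) (forall_mem_partialQuotients (fun i => hd _) _)

end PartialQuotients

section NormShell

lemma mnorm_nonneg (γ : Matrix (Fin 2) (Fin 2) ℤ) : 0 ≤ mnorm γ :=
  (abs_nonneg (γ 0 0)).trans ((le_max_left _ _).trans (le_max_left _ _))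

lemma finite_setOf_mnorm_le (N : ℤ) : {γ | mnorm γ ≤ N}.Finite := by
  refine (Set.finite_Icc (fun _ _ : Fin 2 => -N) (fun _ _ => N)).subset fun γ hγ => ?_
  have hentry : ∀ i j, |γ i j| ≤ N := by
    have hγ' : mnorm γ ≤ N := hγ
    simpa [mnorm, Fin.forall_fin_two, and_assoc] using hγ'
  exact ⟨fun i j => (abs_le.1 (hentry i j)).1, fun i j => (abs_le.1 (hentry i j)).2⟩

open Classical in
/-- The elements `γ` of `Γ_𝒜` with `N / (M + 1) ≤ ‖γ‖ ≤ N`, where `M` is a bound for the alphabet;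
the lower bound is written without division. -/
def normShell (A : Finset ℕ) (M N : ℕ) : Finset (Matrix (Fin 2) (Fin 2) ℤ) :=
  {γ ∈ (finite_setOf_mnorm_le N).toFinset | γ ∈ Gamma A ∧ (N : ℤ) ≤ (M + 1) * mnorm γ}

variable {A : Finset ℕ} {M N : ℕ}

lemma mem_normShell {γ : Matrix (Fin 2) (Fin 2) ℤ} :
    γ ∈ normShell A M N ↔ γ ∈ Gamma A ∧ (N : ℤ) ≤ (M + 1) * mnorm γ ∧ mnorm γ ≤ N := by
  simp [normShell, and_comm, and_assoc]

lemma mnorm_bounds_of_mem_normShell (hM : 0 < M) {γ : Matrix (Fin 2) (Fin 2) ℤ}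
    (hγ : γ ∈ normShell A M N) :
    (N : ℝ) / (70 * (M : ℝ) ^ 2) ≤ mnorm γ ∧ (mnorm γ : ℝ) ≤ 1.01 * N := by
  obtain ⟨-, hlower, hupper⟩ := mem_normShell.1 hγ
  have hlower' : (N : ℝ) ≤ (M + 1) * mnorm γ := mod_cast hlower
  have hupper' : (mnorm γ : ℝ) ≤ N := mod_cast hupper
  have hM1 : (1 : ℝ) ≤ M := Nat.one_le_cast.2 hM
  have hnonneg : (0 : ℝ) ≤ mnorm γ := mod_cast mnorm_nonneg γ
  constructor
  · rw [div_le_iff₀' (by positivity)]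
    refine hlower'.trans (mul_le_mul_of_nonneg_right ?_ hnonneg)
    nlinarith
  · linarith [N.cast_nonneg (α := ℝ)]

lemma exists_cfMat_partialQuotients_mem_normShell (hpos : ∀ a ∈ A, 0 < a)
    (hub : ∀ a ∈ A, a ≤ M) (hN : M ≤ N) {d : ℕ → ℕ} (hd : ∀ i, d i ∈ A) :
    ∃ k, cfMat (partialQuotients d (k + 1)) ∈ normShell A M N := by
  have hd0 : ∀ i, 0 < d i := fun i => hpos _ (hd i)
  obtain ⟨k, hle, hlt⟩ := exists_cont_partialQuotients_le_lt hd0 ((hub _ (hd 0)).trans hN)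
  have hprefix := forall_mem_partialQuotients hd0 (k + 1)
  have hstep : N ≤ (M + 1) * cont (partialQuotients d (k + 1)) := by
    rw [partialQuotients_succ d (k + 1)] at hlt
    exact hlt.le.trans ((cont_append_singleton_le hprefix _).trans (by gcongr; exact hub _ (hd _)))
  refine ⟨k, mem_normShell.2 ⟨⟨_, partialQuotients_succ_ne_nil d k,
    forall_mem_partialQuotients hd _, rfl⟩, ?_⟩⟩
  rw [mnorm_cfMat hprefix]
  exact_mod_cast And.intro hstep hle

lemma normShell_nonempty (hpos : ∀ a ∈ A, 0 < a) (hne : A.Nonempty) (hub : ∀ a ∈ A, a ≤ M)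
    (hN : M ≤ N) : (normShell A M N).Nonempty := by
  obtain ⟨a, ha⟩ := hne
  obtain ⟨k, hk⟩ := exists_cfMat_partialQuotients_mem_normShell hpos hub hN (d := fun _ => a)
    fun _ => ha
  exact ⟨_, hk⟩

open Classical in
/-- The fractions `p / q` read off the second columns of the matrices in the shell; they are the
centres of the balls covering `E_𝒜`. -/
def shellConvergents (A : Finset ℕ) (M N : ℕ) : Finset ℝ :=
  (normShell A M N).image fun γ => (γ 0 1 : ℝ) / γ 1 1

open scoped NNReal in
lemma isCover_shellConvergents (hpos : ∀ a ∈ A, 0 < a) (hub : ∀ a ∈ A, a ≤ M) (hN : M ≤ N)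
    (hN0 : 0 < N) :
    Metric.IsCover (((M + 1) / N : ℝ≥0) ^ 2) (cfSet A) (shellConvergents A M N) := by
  rw [Metric.isCover_iff_subset_iUnion_closedBall]
  rintro x ⟨d, hd, hx⟩
  have hd0 : ∀ i, 0 < d i := fun i => hpos _ (hd i)
  obtain ⟨k, hk⟩ := exists_cfMat_partialQuotients_mem_normShell hpos hub hN hd
  have hprefix := forall_mem_partialQuotients hd0 (k + 1)
  have hq : (0 : ℝ) < cont (partialQuotients d (k + 1)) := Nat.cast_pos.2 (cont_pos hprefix)
  have hstep : (N : ℝ) ≤ (M + 1) * cont (partialQuotients d (k + 1)) := by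
    have h := (mem_normShell.1 hk).2.1
    rw [mnorm_cfMat hprefix] at h
    exact_mod_cast h
  refine Set.mem_biUnion (Finset.mem_image_of_mem _ hk) ?_
  rw [cfMat_one_one, Int.cast_natCast, ← cfVal_eq_cfMat_div (partialQuotients_succ_ne_nil d k),
    Metric.mem_closedBall, Real.dist_eq]
  refine (abs_sub_cfVal_partialQuotients_le hd0 hx k).trans ?_
  push_cast
  rw [← one_div_pow]
  gcongr ?_ ^ 2
  rwa [div_le_div_iff₀ hq (Nat.cast_pos.2 hN0), one_mul]

open scoped NNReal in
lemma dimH_cfSet_le_of_frequently_card_normShell_le (hpos : ∀ a ∈ A, 0 < a)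
    (hub : ∀ a ∈ A, a ≤ M) {s : ℝ≥0}
    (hcard : ∃ᶠ N : ℕ in atTop, ((normShell A M N).card : ℝ≥0) ≤ (N : ℝ≥0) ^ (2 * s : ℝ)) :
    dimH (cfSet A) ≤ s := by
  have hr : Tendsto (fun N : ℕ => ((M + 1) / N : ℝ≥0) ^ 2) atTop (nhds 0) := by
    simpa using (tendsto_const_div_atTop_nhds_zero_nat (M + 1 : ℝ≥0)).pow 2
  refine dimH_le_of_frequently_isCover (C := (M + 1 : ℝ≥0) ^ (2 * s : ℝ)) hr
    (F := shellConvergents A M) ?_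
  refine (hcard.and_eventually ((eventually_ge_atTop M).and (eventually_gt_atTop 0))).mono ?_
  rintro N ⟨hN, hMN, hN0⟩
  have hN0' : (N : ℝ≥0) ≠ 0 := Nat.cast_ne_zero.2 hN0.ne'
  refine ⟨isCover_shellConvergents hpos hub hMN hN0, ?_⟩
  calc ((shellConvergents A M N).card : ℝ≥0) * (((M + 1) / N : ℝ≥0) ^ 2) ^ (s : ℝ)
      ≤ (N : ℝ≥0) ^ (2 * s : ℝ) * (((M + 1) / N : ℝ≥0) ^ 2) ^ (s : ℝ) := by
        gcongr
        exact (Nat.cast_le.2 Finset.card_image_le).trans hN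
    _ = (M + 1 : ℝ≥0) ^ (2 * s : ℝ) := by
        rw [← NNReal.rpow_two, ← NNReal.rpow_mul, ← NNReal.mul_rpow, mul_div_cancel₀ _ hN0']

lemma eventually_rpow_le_card_normShell (hpos : ∀ a ∈ A, 0 < a) (hne : A.Nonempty)
    (hub : ∀ a ∈ A, a ≤ M) {s : ℝ} (hs : s < hdim A) :
    ∀ᶠ N : ℕ in atTop, (N : ℝ) ^ (2 * s) ≤ (normShell A M N).card := by
  rcases le_or_gt s 0 with hs0 | hs0
  · filter_upwards [eventually_ge_atTop M, eventually_ge_atTop 1] with N hN hN1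
    calc (N : ℝ) ^ (2 * s) ≤ 1 :=
        rpow_le_one_of_one_le_of_nonpos (Nat.one_le_cast.2 hN1) (by linarith)
      _ ≤ (normShell A M N).card :=
        Nat.one_le_cast.2 (normShell_nonempty hpos hne hub hN).card_pos
  · lift s to NNReal using hs0.le
    by_contra hcon
    refine hs.not_ge (ENNReal.toReal_le_coe_of_le_coe
      (dimH_cfSet_le_of_frequently_card_normShell_le hpos hub ?_))
    refine (not_eventually.1 hcon).mono fun N hN => ?_
    exact_mod_cast (not_le.1 hN).le

end NormShell

theorem ensemble_exists_general
    (A : Finset ℕ) (hpos : ∀ a ∈ A, 0 < a)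
    (Amax : ℕ) (hmem : Amax ∈ A) (hub : ∀ a ∈ A, a ≤ Amax)
    (ε₀ : ℝ) (hε : 0 < ε₀) :
    ∃ N₀ : ℕ, ∀ N : ℕ, N₀ ≤ N →
      ∃ Ω : Finset (Matrix (Fin 2) (Fin 2) ℤ),
        (↑Ω : Set (Matrix (Fin 2) (Fin 2) ℤ)) ⊆ Gamma A ∧
        (∀ γ ∈ Ω, (N : ℝ) / (70 * (Amax : ℝ)^2) ≤ (mnorm γ : ℝ) ∧
          (mnorm γ : ℝ) ≤ 1.01 * N) ∧
        (N : ℝ) ^ (2 * hdim A - ε₀) ≤ (Ω.card : ℝ) ∧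
        (Ω.card : ℝ) ≤ 9 * (N : ℝ) ^ (2 * hdim A) := by
  obtain ⟨N₀, hN₀⟩ := eventually_atTop.1
    ((eventually_rpow_le_card_normShell hpos ⟨Amax, hmem⟩ hub (sub_lt_self _ (half_pos hε))).and
      (eventually_ge_atTop 1))
  refine ⟨N₀, fun N hN => ?_⟩
  obtain ⟨hcard, hN1⟩ := hN₀ N hN
  rw [show 2 * (hdim A - ε₀ / 2) = 2 * hdim A - ε₀ by ring] at hcard
  obtain ⟨Ω, hΩ, hΩcard⟩ := Finset.exists_subset_card_eq (Nat.ceil_le.2 hcard)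
  have hshell : ∀ γ ∈ Ω, γ ∈ normShell A Amax N := fun γ hγ => hΩ hγ
  refine ⟨Ω, fun γ hγ => (mem_normShell.1 (hshell γ hγ)).1,
    fun γ hγ => mnorm_bounds_of_mem_normShell (hpos _ hmem) (hshell γ hγ), ?_, ?_⟩
  · exact hΩcard ▸ Nat.le_ceil _
  · have hδ : 0 ≤ hdim A := ENNReal.toReal_nonneg
    have hN1' : (1 : ℝ) ≤ N := Nat.one_le_cast.2 hN1
    calc (Ω.card : ℝ) ≤ (N : ℝ) ^ (2 * hdim A - ε₀) + 1 :=
          hΩcard ▸ (Nat.ceil_lt_add_one (by positivity)).le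
      _ ≤ (N : ℝ) ^ (2 * hdim A) + (N : ℝ) ^ (2 * hdim A) := by
          gcongr
          · linarith
          · exact one_le_rpow hN1' (by positivity)
      _ ≤ 9 * (N : ℝ) ^ (2 * hdim A) := by
          linarith [rpow_nonneg (zero_le_one.trans hN1') (2 * hdim A)]

theorem ensemble_exists
    (A : Finset ℕ) (hpos : ∀ a ∈ A, 0 < a) (hcard : 2 ≤ A.card) (h1 : 1 ∈ A)
    (Amax : ℕ) (hmem : Amax ∈ A) (hub : ∀ a ∈ A, a ≤ Amax)
    (hδ : 1/2 < hdim A)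
    (ε₀ : ℝ) (hε : 0 < ε₀) (hε' : ε₀ < 1/2500) :
    ∃ N₀ : ℕ, ∀ N : ℕ, N₀ ≤ N →
      ∃ Ω : Finset (Matrix (Fin 2) (Fin 2) ℤ),
        (↑Ω : Set (Matrix (Fin 2) (Fin 2) ℤ)) ⊆ Gamma A ∧
        (∀ γ ∈ Ω, (N : ℝ) / (70 * (Amax : ℝ)^2) ≤ (mnorm γ : ℝ) ∧
          (mnorm γ : ℝ) ≤ 1.01 * N) ∧
        (N : ℝ) ^ (2 * hdim A - ε₀) ≤ (Ω.card : ℝ) ∧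
        (Ω.card : ℝ) ≤ 9 * (N : ℝ) ^ (2 * hdim A) := by
  exact ensemble_exists_general A hpos Amax hmem hub ε₀ hε

end
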